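/- arXiv:1607.07777 — 6 statements merged into one kernel-verified Lean document; each statement's English description precedes it below -/
import Mathlib

section
/- For every orthonormal basis (e_j) of V and all X, Y ∈ V, ∑_j ⟨ξ_X e_j, ξ_Y e_j⟩ = (1/4)(|θ|²⟨X,Y⟩ − θ(X)θ(Y) − θ(JX)θ(JY)). Consequently ⟨X,Y⟩ + ∑_j ⟨ξ_X e_j, ξ_Y e_j⟩ = g̃(X,Y), where g̃(X,Y) := (1 + |θ|²/4)⟨X,Y⟩ − (1/4)(θ(X)θ(Y) + θ(JX)θ(JY)). -/
open RealInnerProductSpace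

/-- For every orthonormal basis `(e_j)` of `V` and all `X, Y`,
`∑_j ⟨ξ_X e_j, ξ_Y e_j⟩ = (1/4)(|θ|²⟨X,Y⟩ - θ(X)θ(Y) - θ(JX)θ(JY))`, and consequently
`⟨X,Y⟩ + ∑_j ⟨ξ_X e_j, ξ_Y e_j⟩ = g̃(X,Y)` with
`g̃(X,Y) = (1 + |θ|²/4)⟨X,Y⟩ - (1/4)(θ(X)θ(Y) + θ(JX)θ(JY))`. -/
theorem stmt_5
    {V : Type*} [NormedAddCommGroup V] [InnerProductSpace ℝ V]
    (n : ℕ) (hn : 1 ≤ n) (hdim : Module.finrank ℝ V = 2 * n)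
    (J : V →ₗ[ℝ] V) (hJ2 : ∀ X : V, J (J X) = -X)
    (hJo : ∀ X Y : V, ⟪J X, J Y⟫ = ⟪X, Y⟫)
    (θ : V)
    (ξ : V → V → V)
    (hξ : ∀ X Y : V, ξ X Y =
      -(1 / 4 : ℝ) • (⟪θ, Y⟫ • X + ⟪θ, J Y⟫ • J X - ⟪X, Y⟫ • θ - ⟪X, J Y⟫ • J θ))
    (gt : V → V → ℝ)
    (hgt : ∀ X Y : V, gt X Y =
      (1 + ⟪θ, θ⟫ / 4) * ⟪X, Y⟫ - (1 / 4 : ℝ) * (⟪θ, X⟫ * ⟪θ, Y⟫ + ⟪θ, J X⟫ * ⟪θ, J Y⟫)) :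
    ∀ (e : OrthonormalBasis (Fin (2 * n)) ℝ V) (X Y : V),
      (∑ j, ⟪ξ X (e j), ξ Y (e j)⟫) =
        (1 / 4 : ℝ) * (⟪θ, θ⟫ * ⟪X, Y⟫ - ⟪θ, X⟫ * ⟪θ, Y⟫ - ⟪θ, J X⟫ * ⟪θ, J Y⟫) ∧
      ⟪X, Y⟫ + (∑ j, ⟪ξ X (e j), ξ Y (e j)⟫) = gt X Y := by
  intro e X Y
  have hJs : ∀ A B : V, ⟪A, J B⟫ = -⟪J A, B⟫ := by
    intro A B
    rw [← hJo A (J B), hJ2, inner_neg_right]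
  have hJself : ∀ A : V, ⟪J A, A⟫ = 0 := by
    intro A
    have h := hJs A A
    rw [real_inner_comm] at h
    linarith
  have S : ∀ a b : V, ∑ j, ⟪a, e j⟫ * ⟪b, e j⟫ = ⟪a, b⟫ := by
    intro a b
    rw [← e.sum_inner_mul_inner a b]
    exact Finset.sum_congr rfl fun j _ => by rw [real_inner_comm b (e j)]
  have P : ∀ j, ⟪ξ X (e j), ξ Y (e j)⟫ = (1 / 16 : ℝ) * (
      (1) * ⟪X, Y⟫ * (⟪θ, e j⟫ * ⟪θ, e j⟫) +
      (-1) * ⟪X, J Y⟫ * (⟪θ, e j⟫ * ⟪J θ, e j⟫) +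
      (-1) * ⟪X, θ⟫ * (⟪θ, e j⟫ * ⟪Y, e j⟫) +
      (1) * ⟪X, J θ⟫ * (⟪θ, e j⟫ * ⟪J Y, e j⟫) +
      (-1) * ⟪J X, Y⟫ * (⟪J θ, e j⟫ * ⟪θ, e j⟫) +
      (1) * ⟪J X, J Y⟫ * (⟪J θ, e j⟫ * ⟪J θ, e j⟫) +
      (1) * ⟪J X, θ⟫ * (⟪J θ, e j⟫ * ⟪Y, e j⟫) +
      (-1) * ⟪J X, J θ⟫ * (⟪J θ, e j⟫ * ⟪J Y, e j⟫) +
      (-1) * ⟪θ, Y⟫ * (⟪X, e j⟫ * ⟪θ, e j⟫) +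
      (1) * ⟪θ, J Y⟫ * (⟪X, e j⟫ * ⟪J θ, e j⟫) +
      (1) * ⟪θ, θ⟫ * (⟪X, e j⟫ * ⟪Y, e j⟫) +
      (-1) * ⟪θ, J θ⟫ * (⟪X, e j⟫ * ⟪J Y, e j⟫) +
      (1) * ⟪J θ, Y⟫ * (⟪J X, e j⟫ * ⟪θ, e j⟫) +
      (-1) * ⟪J θ, J Y⟫ * (⟪J X, e j⟫ * ⟪J θ, e j⟫) +
      (-1) * ⟪J θ, θ⟫ * (⟪J X, e j⟫ * ⟪Y, e j⟫) +
      (1) * ⟪J θ, J θ⟫ * (⟪J X, e j⟫ * ⟪J Y, e j⟫)) := by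
    intro j
    rw [hξ, hξ, hJs θ (e j), hJs X (e j), hJs Y (e j)]
    simp only [inner_add_left, inner_add_right, inner_sub_left, inner_sub_right,
      real_inner_smul_left, real_inner_smul_right]
    ring
  have main : (∑ j, ⟪ξ X (e j), ξ Y (e j)⟫) =
      (1 / 4 : ℝ) * (⟪θ, θ⟫ * ⟪X, Y⟫ - ⟪θ, X⟫ * ⟪θ, Y⟫ - ⟪θ, J X⟫ * ⟪θ, J Y⟫) := by
    rw [Finset.sum_congr rfl fun j _ => P j]
    simp only [← Finset.mul_sum, Finset.sum_add_distrib, S]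
    have h1 : ⟪X, θ⟫ = ⟪θ, X⟫ := real_inner_comm _ _
    have h2 : ⟪J X, θ⟫ = -⟪J θ, X⟫ := by rw [real_inner_comm, hJs]
    simp only [hJo, hJs, hJself, h1, h2]
    ring
  refine ⟨main, ?_⟩
  rw [main, hgt]
  ring
end

section
/- The deformed metric g̃ is a warped product with respect to the splitting V = D^⊥ ⊕ D, where D := span{θ, Jθ}: if X is orthogonal to both θ and Jθ, then g̃(X,Y) = (1 + |θ|²/4)⟨X,Y⟩ for all Y ∈ V; and if X ∈ span{θ, Jθ}, then g̃(X,Y) = ⟨X,Y⟩ for all Y ∈ V. -/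
open RealInnerProductSpace

/-- The deformed metric `g̃` is a warped product with respect to the
splitting `V = D^⊥ ⊕ D`, where `D = span{θ, Jθ}`: if `X ⊥ θ` and `X ⊥ Jθ` then
`g̃(X,Y) = (1 + |θ|²/4)⟨X,Y⟩` for all `Y`, and if `X ∈ span{θ, Jθ}` then
`g̃(X,Y) = ⟨X,Y⟩` for all `Y`. -/
theorem stmt_6
    {V : Type*} [NormedAddCommGroup V] [InnerProductSpace ℝ V]
    (n : ℕ) (hn : 1 ≤ n) (hdim : Module.finrank ℝ V = 2 * n)
    (J : V →ₗ[ℝ] V) (hJ2 : ∀ X : V, J (J X) = -X)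
    (hJo : ∀ X Y : V, ⟪J X, J Y⟫ = ⟪X, Y⟫)
    (θ : V)
    (gt : V → V → ℝ)
    (hgt : ∀ X Y : V, gt X Y =
      (1 + ⟪θ, θ⟫ / 4) * ⟪X, Y⟫ - (1 / 4 : ℝ) * (⟪θ, X⟫ * ⟪θ, Y⟫ + ⟪θ, J X⟫ * ⟪θ, J Y⟫)) :
    (∀ X : V, ⟪θ, X⟫ = 0 → ⟪J θ, X⟫ = 0 →
      ∀ Y : V, gt X Y = (1 + ⟪θ, θ⟫ / 4) * ⟪X, Y⟫) ∧
    (∀ X ∈ Submodule.span ℝ ({θ, J θ} : Set V), ∀ Y : V, gt X Y = ⟪X, Y⟫) := by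
  have hs : ∀ X : V, ⟪θ, J X⟫ = -⟪J θ, X⟫ := by
    intro X
    rw [← hJo θ (J X), hJ2, inner_neg_right]
  have h0 : ⟪J θ, θ⟫ = 0 := by
    have h := hs θ
    rw [real_inner_comm] at h
    linarith
  have h0' : ⟪θ, J θ⟫ = 0 := by rw [hs, h0, neg_zero]
  refine ⟨?_, ?_⟩
  · intro X h1 h2 Y
    rw [hgt, hs X, h1, h2]
    ring
  · intro X hX Y
    obtain ⟨a, b, rfl⟩ := Submodule.mem_span_pair.1 hX
    rw [hgt, hs, hs Y]
    simp only [inner_add_left, inner_add_right, real_inner_smul_left, real_inner_smul_right,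
      h0, h0', hJo θ θ]
    ring
end

section
/- The bilinear map (X, Y) ↦ ⟨θ, A_{JX'} Y⟩ is symmetric: ⟨θ, A_{JX'} Y⟩ = ⟨θ, A_{JY'} X⟩ for all X, Y ∈ V. -/
open RealInnerProductSpace

/-- The bilinear map `(X, Y) ↦ ⟨θ, A_{JX'} Y⟩` is symmetric:
`⟨θ, A_{JX'} Y⟩ = ⟨θ, A_{JY'} X⟩` for all `X, Y`, where
`A_X Y = (1/2)(θ(JY)X - θ(Y)JX - ⟨X,JY⟩θ + ⟨X,Y⟩Jθ)` and
`X' = (1 + |θ|²/4)⁻¹ (X + (1/4)(θ(X)θ + θ(JX)Jθ))`. -/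
theorem stmt_9
    {V : Type*} [NormedAddCommGroup V] [InnerProductSpace ℝ V]
    (n : ℕ) (hn : 1 ≤ n) (hdim : Module.finrank ℝ V = 2 * n)
    (J : V →ₗ[ℝ] V) (hJ2 : ∀ X : V, J (J X) = -X)
    (hJo : ∀ X Y : V, ⟪J X, J Y⟫ = ⟪X, Y⟫)
    (θ : V)
    (p : V → V)
    (hp : ∀ X : V, p X =
      (1 + ⟪θ, θ⟫ / 4)⁻¹ • (X + (1 / 4 : ℝ) • (⟪θ, X⟫ • θ + ⟪θ, J X⟫ • J θ)))
    (A : V → V → V)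
    (hA : ∀ X Y : V, A X Y =
      (1 / 2 : ℝ) • (⟪θ, J Y⟫ • X - ⟪θ, Y⟫ • J X - ⟪X, J Y⟫ • θ + ⟪X, Y⟫ • J θ)) :
    ∀ X Y : V, ⟪θ, A (J (p X)) Y⟫ = ⟪θ, A (J (p Y)) X⟫ := by
  intro X Y
  have hs : ∀ U W : V, ⟪J U, W⟫ = -⟪U, J W⟫ := by
    intro U W
    have h := hJo U (J W)
    rw [hJ2, inner_neg_right] at h
    linarith
  have h0 : ⟪θ, J θ⟫ = 0 := by
    have h := hs θ θ
    rw [real_inner_comm] at h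
    linarith
  have key : ∀ U W : V, ⟪θ, A (J U) W⟫ =
      1 / 2 * (⟪θ, J W⟫ * ⟪θ, J U⟫ + ⟪θ, W⟫ * ⟪θ, U⟫ - ⟪U, W⟫ * ⟪θ, θ⟫) := by
    intro U W
    rw [hA]
    simp only [inner_add_right, inner_sub_right, inner_smul_right, hJ2, hJo, inner_neg_right, h0]
    ring
  rw [key, key, hp, hp]
  simp only [map_add, map_smul, inner_add_right, inner_add_left, inner_smul_right,
    real_inner_smul_left, hJ2, inner_neg_right, h0, hs]
  rw [real_inner_comm X Y]
  ring
end

section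
/- Let R : V × V × V → V be trilinear with R(X,Y)Z = −R(Y,X)Z for all X, Y, Z. Then for every orthonormal basis (e_j) of V and every X ∈ V, R_{ξ_X}(X) := ∑_j R(e_j, ξ_X e_j)X = −(1/2)(R(θ, X)X − R(Jθ, JX)X). -/
open RealInnerProductSpace

/-- For a trilinear map `R` with `R(X,Y)Z = -R(Y,X)Z`, every orthonormal
basis `(e_j)` and every `X`,
`R_{ξ_X}(X) = ∑_j R(e_j, ξ_X e_j)X = -(1/2)(R(θ, X)X - R(Jθ, JX)X)`. -/
theorem stmt_11
    {V : Type*} [NormedAddCommGroup V] [InnerProductSpace ℝ V]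
    (n : ℕ) (hn : 1 ≤ n) (hdim : Module.finrank ℝ V = 2 * n)
    (J : V →ₗ[ℝ] V) (hJ2 : ∀ X : V, J (J X) = -X)
    (hJo : ∀ X Y : V, ⟪J X, J Y⟫ = ⟪X, Y⟫)
    (θ : V)
    (ξ : V → V → V)
    (hξ : ∀ X Y : V, ξ X Y =
      -(1 / 4 : ℝ) • (⟪θ, Y⟫ • X + ⟪θ, J Y⟫ • J X - ⟪X, Y⟫ • θ - ⟪X, J Y⟫ • J θ))
    (R : V →ₗ[ℝ] V →ₗ[ℝ] V →ₗ[ℝ] V)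
    (hR : ∀ X Y Z : V, R X Y Z = -R Y X Z) :
    ∀ (e : OrthonormalBasis (Fin (2 * n)) ℝ V) (X : V),
      (∑ j, R (e j) (ξ X (e j)) X) =
        -(1 / 2 : ℝ) • (R θ X X - R (J θ) (J X) X) := by
  intro e X
  have hJ : ∀ A B : V, ⟪A, J B⟫ = -⟪J A, B⟫ := by
    intro A B
    have h := hJo A (J B)
    rw [hJ2, inner_neg_right] at h
    linarith
  have key : ∀ A B : V, (∑ j, ⟪A, e j⟫ • R (e j) B X) = R A B X := by
    intro A B
    have h : (∑ j, ⟪A, e j⟫ • e j) = A := by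
      have h2 := e.sum_repr' A
      simpa only [real_inner_comm] using h2
    conv_rhs => rw [← h]
    simp only [map_sum, map_smul, LinearMap.sum_apply, LinearMap.smul_apply]
  have step : ∀ j, R (e j) (ξ X (e j)) X =
      -(1 / 4 : ℝ) • (⟪θ, e j⟫ • R (e j) X X - ⟪J θ, e j⟫ • R (e j) (J X) X
        - ⟪X, e j⟫ • R (e j) θ X + ⟪J X, e j⟫ • R (e j) (J θ) X) := by
    intro j
    rw [hξ, hJ θ, hJ X]
    simp only [map_sub, map_add, map_smul, LinearMap.sub_apply, LinearMap.add_apply,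
      LinearMap.smul_apply]
    module
  simp only [step]
  rw [← Finset.smul_sum, Finset.sum_add_distrib, Finset.sum_sub_distrib,
    Finset.sum_sub_distrib, key, key, key, key, hR X θ, hR (J X) (J θ)]
  module
end

section
/- For every orthonormal basis (e_j) of V and all X, Y ∈ V, ∑_j ⟨ξ_X e_j, ξ_Y e_j⟩ = 2α²(⟨X,Y⟩ − η(X)η(Y)). Consequently ⟨X,Y⟩ + ∑_j ⟨ξ_X e_j, ξ_Y e_j⟩ = g̃(X,Y), where g̃(X,Y) := (1+2α²)⟨X,Y⟩ − 2α² η(X)η(Y). -/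
open RealInnerProductSpace

/-- For every orthonormal basis `(e_j)` of `V` and all `X, Y`,
`∑_j ⟨ξ_X e_j, ξ_Y e_j⟩ = 2α²(⟨X,Y⟩ - η(X)η(Y))`, and consequently
`⟨X,Y⟩ + ∑_j ⟨ξ_X e_j, ξ_Y e_j⟩ = g̃(X,Y)` with
`g̃(X,Y) = (1+2α²)⟨X,Y⟩ - 2α²η(X)η(Y)`. -/
theorem stmt_15
    {V : Type*} [NormedAddCommGroup V] [InnerProductSpace ℝ V]
    (n : ℕ) (hn : 1 ≤ n) (hdim : Module.finrank ℝ V = 2 * n + 1)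
    (ζ : V) (hζ : ‖ζ‖ = 1)
    (α : ℝ)
    (ξ : V → V → V)
    (hξ : ∀ X Y : V, ξ X Y = α • (⟪X, Y⟫ • ζ - ⟪ζ, Y⟫ • X))
    (gt : V → V → ℝ)
    (hgt : ∀ X Y : V, gt X Y =
      (1 + 2 * α ^ 2) * ⟪X, Y⟫ - 2 * α ^ 2 * (⟪ζ, X⟫ * ⟪ζ, Y⟫)) :
    ∀ (e : OrthonormalBasis (Fin (2 * n + 1)) ℝ V) (X Y : V),
      (∑ j, ⟪ξ X (e j), ξ Y (e j)⟫) =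
        2 * α ^ 2 * (⟪X, Y⟫ - ⟪ζ, X⟫ * ⟪ζ, Y⟫) ∧
      ⟪X, Y⟫ + (∑ j, ⟪ξ X (e j), ξ Y (e j)⟫) = gt X Y := by
  intro e X Y
  have P : ∀ A B : V, ∑ j, ⟪A, e j⟫ * ⟪B, e j⟫ = ⟪A, B⟫ := by
    intro A B
    rw [← e.sum_inner_mul_inner A B]
    exact Finset.sum_congr rfl fun j _ => by rw [real_inner_comm B (e j)]
  have hζζ : ⟪ζ, ζ⟫ = 1 := by rw [real_inner_self_eq_norm_sq, hζ]; norm_num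
  have key : (∑ j, ⟪ξ X (e j), ξ Y (e j)⟫) =
      2 * α ^ 2 * (⟪X, Y⟫ - ⟪ζ, X⟫ * ⟪ζ, Y⟫) := by
    have h : ∀ j, ⟪ξ X (e j), ξ Y (e j)⟫ =
        α ^ 2 * (⟪X, e j⟫ * ⟪Y, e j⟫) - α ^ 2 * ⟪ζ, Y⟫ * (⟪X, e j⟫ * ⟪ζ, e j⟫)
        - α ^ 2 * ⟪ζ, X⟫ * (⟪ζ, e j⟫ * ⟪Y, e j⟫)
        + α ^ 2 * ⟪X, Y⟫ * (⟪ζ, e j⟫ * ⟪ζ, e j⟫) := by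
      intro j
      rw [hξ, hξ]
      simp only [inner_sub_left, inner_sub_right, real_inner_smul_left,
        real_inner_smul_right, hζζ, real_inner_comm ζ X]
      ring
    simp only [h, Finset.sum_add_distrib, Finset.sum_sub_distrib, ← Finset.mul_sum, P, hζζ,
      real_inner_comm ζ X]
    ring
  refine ⟨key, ?_⟩
  rw [key, hgt]
  ring
end

section
/- Let dα ∈ V be a vector and r : V → ℝ a linear functional (playing the roles of the gradient of α and of Ric(ζ, ·)). Then the minimality equation 0 = η(Z)⟨dα, Y'⟩ − η(Y)⟨dα, Z'⟩ + (2α²/(1+2α²))(η(Y)·r(Z) − η(Z)·r(Y)) holds for all Y, Z ∈ V if and only if ⟨dα, Y⟩ = 2α²·r(Y) for every Y ∈ V with η(Y) = 0. (This is the algebraic content of the theorem that an α-Kenmotsu manifold is minimal as a U(n)×1-structure iff Yα = 2α² Ric(ζ, Y) for Y orthogonal to ζ.) -/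
open RealInnerProductSpace

/-- For a vector `dα ∈ V` and a linear functional `r : V → ℝ` (playing
the roles of the gradient of `α` and of `Ric(ζ, ·)`), the minimality equation
`0 = η(Z)⟨dα, Y'⟩ - η(Y)⟨dα, Z'⟩ + (2α²/(1+2α²))(η(Y)r(Z) - η(Z)r(Y))` holds for all
`Y, Z` iff `⟨dα, Y⟩ = 2α²·r(Y)` for every `Y` with `η(Y) = 0`. This is the algebraic
content of: an α-Kenmotsu manifold is minimal as a `U(n)×1`-structure iff
`Yα = 2α² Ric(ζ, Y)` for `Y` orthogonal to `ζ`. -/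
theorem stmt_19
    {V : Type*} [NormedAddCommGroup V] [InnerProductSpace ℝ V]
    (n : ℕ) (hn : 1 ≤ n) (hdim : Module.finrank ℝ V = 2 * n + 1)
    (ζ : V) (hζ : ‖ζ‖ = 1)
    (α : ℝ) (dα : V) (r : V →ₗ[ℝ] ℝ)
    (p : V → V)
    (hp : ∀ X : V, p X =
      (1 / (1 + 2 * α ^ 2)) • X + ((2 * α ^ 2 / (1 + 2 * α ^ 2)) * ⟪ζ, X⟫) • ζ) :
    (∀ Y Z : V,
      0 = ⟪ζ, Z⟫ * ⟪dα, p Y⟫ - ⟪ζ, Y⟫ * ⟪dα, p Z⟫ +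
        (2 * α ^ 2 / (1 + 2 * α ^ 2)) * (⟪ζ, Y⟫ * r Z - ⟪ζ, Z⟫ * r Y)) ↔
    (∀ Y : V, ⟪ζ, Y⟫ = 0 → ⟪dα, Y⟫ = 2 * α ^ 2 * r Y) := by
  have hc : (1 + 2 * α ^ 2) ≠ 0 := by positivity
  have hzz : ⟪ζ, ζ⟫ = 1 := by rw [real_inner_self_eq_norm_sq, hζ]; norm_num
  have hin : ∀ X : V, ⟪dα, p X⟫ = (1 / (1 + 2 * α ^ 2)) * ⟪dα, X⟫ +
      ((2 * α ^ 2 / (1 + 2 * α ^ 2)) * ⟪ζ, X⟫) * ⟪dα, ζ⟫ := by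
    intro X
    rw [hp, inner_add_right, real_inner_smul_right, real_inner_smul_right]
  constructor
  · intro h Y hY
    have h1 := h Y ζ
    rw [hin Y, hY, hzz] at h1
    field_simp at h1
    linarith
  · intro h Y Z
    have h1 := h (⟪ζ, Z⟫ • Y - ⟪ζ, Y⟫ • Z) (by
      rw [inner_sub_right, real_inner_smul_right, real_inner_smul_right]; ring)
    rw [inner_sub_right, real_inner_smul_right, real_inner_smul_right, map_sub, map_smul,
      map_smul, smul_eq_mul, smul_eq_mul] at h1
    rw [hin Y, hin Z]
    linear_combination (-1 / (1 + 2 * α ^ 2)) * h1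
end
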